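/- arXiv:2102.13358 — 7 statements merged into one kernel-verified Lean document; each statement's English description precedes it below -/
import Mathlib

section
/- Let S be a real symmetric traceless 3×3 matrix, and set s = tr(S²) and t = tr(S³). Then 6t² ≤ s³. -/
open Matrix

/-- The trace of a power of a Hermitian matrix is the corresponding power sum of its eigenvalues. -/
theorem Matrix.IsHermitian.trace_pow_eq_sum_eigenvalues_pow {𝕜 n : Type*} [RCLike 𝕜] [Fintype n]
    [DecidableEq n] {A : Matrix n n 𝕜} (hA : A.IsHermitian) (k : ℕ) :
    (A ^ k).trace = ∑ i, (hA.eigenvalues i : 𝕜) ^ k := by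
  conv_lhs => rw [hA.spectral_theorem]
  rw [← map_pow, Matrix.diagonal_pow, Unitary.conjStarAlgAut_apply, Matrix.trace_mul_cycle,
    Unitary.coe_star_mul_self, one_mul, Matrix.trace_diagonal]
  simp

/-- For reals summing to zero, the difference of the two sides is twice the discriminant
`((a - b) * (b - c) * (c - a)) ^ 2`. -/
theorem six_mul_sum_cubes_sq_le {a b c : ℝ} (h : a + b + c = 0) :
    6 * (a ^ 3 + b ^ 3 + c ^ 3) ^ 2 ≤ (a ^ 2 + b ^ 2 + c ^ 2) ^ 3 := by
  obtain rfl : c = -a - b := by linarith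
  linarith [sq_nonneg ((a - b) * (b - (-a - b)) * ((-a - b) - a))]

theorem six_t_sq_le_s_cubed (S : Matrix (Fin 3) (Fin 3) ℝ) (hsymm : S.IsSymm)
    (hS : S.trace = 0) (s t : ℝ) (hs : s = (S ^ 2).trace) (ht : t = (S ^ 3).trace) :
    6 * t ^ 2 ≤ s ^ 3 := by
  have hH : S.IsHermitian := by
    rwa [Matrix.IsHermitian, Matrix.conjTranspose_eq_transpose_of_trivial]
  rw [hH.trace_eq_sum_eigenvalues, Fin.sum_univ_three] at hS
  rw [hs, ht, hH.trace_pow_eq_sum_eigenvalues_pow, hH.trace_pow_eq_sum_eigenvalues_pow,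
    Fin.sum_univ_three, Fin.sum_univ_three]
  exact six_mul_sum_cubes_sq_le hS
end

section
/- Let S be a nonzero real symmetric traceless 3×3 matrix, and set s = tr(S²) and t = tr(S³). Assume 6t² = s³ and s ≠ 0. Then t ≠ 0, and S has exactly two distinct eigenvalues: 2t/s, whose eigenspace is one-dimensional, and −t/s, whose eigenspace is two-dimensional. -/
open Matrix Module

/-- If `(f - a) (f - b) = 0` with `a ≠ b`, then `(a - b)⁻¹ (f - b)` is a projection onto the
`a`-eigenspace of `f`. -/
lemma isProj_eigenspace_of_quadratic {K V : Type*} [Field K] [AddCommGroup V] [Module K V]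
    {f : End K V} {a b : K} (hab : a ≠ b) (hf : ∀ v, f (f v) = (a + b) • f v - (a * b) • v) :
    LinearMap.IsProj (End.eigenspace f a) ((a - b)⁻¹ • (f - b • (1 : End K V))) where
  map_mem v := by
    rw [End.mem_eigenspace_iff]
    simp only [LinearMap.smul_apply, LinearMap.sub_apply, End.one_apply, map_smul, map_sub, hf]
    module
  map_id v hv := by
    rw [End.mem_eigenspace_iff] at hv
    simp only [LinearMap.smul_apply, LinearMap.sub_apply, End.one_apply, hv]
    rw [← sub_smul, smul_smul, inv_mul_cancel₀ (sub_ne_zero.mpr hab), one_smul]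

/-- The dimension of an eigenspace of an operator annihilated by a separable quadratic. -/
lemma finrank_eigenspace_mul_of_quadratic {K V : Type*} [Field K] [AddCommGroup V] [Module K V]
    [FiniteDimensional K V] {f : End K V} {a b : K} (hab : a ≠ b)
    (hf : ∀ v, f (f v) = (a + b) • f v - (a * b) • v) :
    (a - b) * (finrank K (End.eigenspace f a) : K) = LinearMap.trace K V f - b * finrank K V := by
  rw [← (isProj_eigenspace_of_quadratic hab hf).trace, map_smul, map_sub, map_smul,
    LinearMap.trace_one, smul_eq_mul, smul_eq_mul, mul_inv_cancel_left₀ (sub_ne_zero.mpr hab)]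

lemma eigenvalue_eq_or_eq_of_quadratic {K V : Type*} [Field K] [AddCommGroup V] [Module K V]
    {f : End K V} {a b μ : K} (hf : ∀ v, f (f v) = (a + b) • f v - (a * b) • v)
    (hμ : End.HasEigenvalue f μ) : μ = a ∨ μ = b := by
  obtain ⟨v, hv⟩ := hμ.exists_hasEigenvector
  have h := hf v
  rw [hv.apply_eq_smul, map_smul, hv.apply_eq_smul] at h
  have h0 : ((μ - a) * (μ - b)) • v = 0 := by
    rw [← sub_eq_zero] at h
    rw [← h]
    module
  simpa [hv.2, sub_eq_zero] using h0

lemma hasEigenvalue_of_finrank_ne_zero {K V : Type*} [Field K] [AddCommGroup V] [Module K V]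
    {f : End K V} {a : K} (h : finrank K (End.eigenspace f a) ≠ 0) : End.HasEigenvalue f a := by
  rw [End.hasEigenvalue_iff]
  intro h0
  rw [h0, finrank_bot] at h
  exact h rfl

lemma two_mul_trace_pow_four_of_trace_eq_zero {R : Type*} [CommRing R]
    (S : Matrix (Fin 3) (Fin 3) R) (hS : S.trace = 0) :
    2 * (S ^ 4).trace = (S ^ 2).trace ^ 2 := by
  have h22 : S 2 2 = -S 0 0 - S 1 1 := by
    rw [trace_fin_three] at hS
    linear_combination hS
  simp only [pow_succ, pow_zero, one_mul, trace_fin_three, mul_apply, Fin.sum_univ_three, h22]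
  ring

lemma Matrix.IsSymm.eq_zero_of_trace_sq_eq_zero {n : Type*} [Fintype n]
    [DecidableEq n] {P : Matrix n n ℝ} (hP : P.IsSymm) (h : (P ^ 2).trace = 0) : P = 0 := by
  rw [← trace_conjTranspose_mul_self_eq_zero_iff, conjTranspose_eq_transpose_of_trivial, hP.eq,
    ← sq, h]

/-- A traceless symmetric matrix with `tr S² = 6 a²` and `tr S³ = -6 a³` satisfies
`(S - a) (S + 2 a) = 0`. -/
lemma sq_eq_of_trace_sq_of_trace_cube {S : Matrix (Fin 3) (Fin 3) ℝ} (hsymm : S.IsSymm)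
    (hS : S.trace = 0) {a : ℝ} (h2 : (S ^ 2).trace = 6 * a ^ 2)
    (h3 : (S ^ 3).trace = -6 * a ^ 3) :
    S ^ 2 = (-a) • S + (2 * a ^ 2) • (1 : Matrix (Fin 3) (Fin 3) ℝ) := by
  set P := S ^ 2 + a • S - (2 * a ^ 2) • (1 : Matrix (Fin 3) (Fin 3) ℝ) with hPdef
  have hPsymm : P.IsSymm :=
    ((hsymm.pow 2).add (hsymm.smul a)).sub (isSymm_one.smul _)
  have hPsq : P ^ 2 = S ^ 4 + (2 * a) • S ^ 3 - (3 * a ^ 2) • S ^ 2 - (4 * a ^ 3) • S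
      + (4 * a ^ 4) • (1 : Matrix (Fin 3) (Fin 3) ℝ) := by
    simp only [hPdef, pow_succ, pow_zero, one_mul, mul_add, add_mul, mul_sub, sub_mul,
      smul_mul_assoc, mul_smul_comm, mul_one, mul_assoc]
    module
  have h4 := two_mul_trace_pow_four_of_trace_eq_zero S hS
  have hP : P = 0 := by
    apply hPsymm.eq_zero_of_trace_sq_eq_zero
    rw [hPsq]
    simp only [trace_add, trace_sub, trace_smul, trace_one, smul_eq_mul, hS, h2, h3,
      Fintype.card_fin] at h4 ⊢
    push_cast
    linear_combination h4 / 2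
  rw [← sub_eq_zero, ← hP, hPdef]
  module

theorem algebraically_special_eigenstructure (S : Matrix (Fin 3) (Fin 3) ℝ)
    (hS0 : S ≠ 0) (hsymm : S.IsSymm) (hS : S.trace = 0)
    (s t : ℝ) (hs : s = (S ^ 2).trace) (ht : t = (S ^ 3).trace)
    (hspec : 6 * t ^ 2 = s ^ 3) (hsne : s ≠ 0) :
    t ≠ 0 ∧
    2 * t / s ≠ -t / s ∧
    Module.End.HasEigenvalue (Matrix.toLin' S) (2 * t / s) ∧
    Module.End.HasEigenvalue (Matrix.toLin' S) (-t / s) ∧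
    (∀ μ : ℝ, Module.End.HasEigenvalue (Matrix.toLin' S) μ → μ = 2 * t / s ∨ μ = -t / s) ∧
    Module.finrank ℝ (Module.End.eigenspace (Matrix.toLin' S) (2 * t / s)) = 1 ∧
    Module.finrank ℝ (Module.End.eigenspace (Matrix.toLin' S) (-t / s)) = 2 := by
  have htne : t ≠ 0 := by
    rintro rfl
    exact hsne (pow_eq_zero_iff (three_ne_zero) |>.mp (by linarith))
  obtain ⟨a, ha⟩ : ∃ a, a = -t / s := ⟨_, rfl⟩
  have ha0 : a ≠ 0 := ha ▸ div_ne_zero (neg_ne_zero.mpr htne) hsne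
  have hta : t = -(a * s) := by rw [ha]; field_simp
  have hsa : s = 6 * a ^ 2 := by
    rw [hta] at hspec
    apply mul_left_cancel₀ (pow_ne_zero 2 hsne)
    linear_combination -hspec
  have hsimple : 2 * t / s = -2 * a := by rw [ha]; ring
  have hne : -2 * a ≠ a := fun h => ha0 (by linarith)
  have hsq := sq_eq_of_trace_sq_of_trace_cube hsymm hS (hs ▸ hsa)
    (a := a) (by rw [← ht, hta, hsa]; ring)
  have hf : ∀ v, toLin' S (toLin' S v) = (-2 * a + a) • toLin' S v - (-2 * a * a) • v := by
    intro v
    rw [toLin'_apply, toLin'_apply, mulVec_mulVec, ← sq, hsq, add_mulVec, smul_mulVec, smul_mulVec,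
      one_mulVec]
    module
  have hf' : ∀ v, toLin' S (toLin' S v) = (a + -2 * a) • toLin' S v - (a * (-2 * a)) • v := by
    intro v
    rw [hf, add_comm a, mul_comm a]
  have hdim1 : finrank ℝ (End.eigenspace (toLin' S) (-2 * a)) = 1 := by
    have h := finrank_eigenspace_mul_of_quadratic hne hf
    rw [trace_toLin'_eq, hS, finrank_fin_fun] at h
    have : (finrank ℝ (End.eigenspace (toLin' S) (-2 * a)) : ℝ) = 1 := by
      apply mul_left_cancel₀ ha0
      push_cast at h
      linear_combination -h / 3
    exact_mod_cast this
  have hdim2 : finrank ℝ (End.eigenspace (toLin' S) a) = 2 := by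
    have h := finrank_eigenspace_mul_of_quadratic hne.symm hf'
    rw [trace_toLin'_eq, hS, finrank_fin_fun] at h
    have : (finrank ℝ (End.eigenspace (toLin' S) a) : ℝ) = 2 := by
      apply mul_left_cancel₀ ha0
      push_cast at h
      linear_combination h / 3
    exact_mod_cast this
  rw [← ha, hsimple]
  exact ⟨htne, hne, hasEigenvalue_of_finrank_ne_zero (by simp [hdim1]),
    hasEigenvalue_of_finrank_ne_zero (by simp [hdim2]),
    fun μ hμ => eigenvalue_eq_or_eq_of_quadratic hf hμ, hdim1, hdim2⟩
end

section
/- Let R be a real symmetric 3×3 matrix, r = tr(R), S = R − (r/3)·I its traceless part, s = tr(S²) and t = tr(S³). Assume 6t² = s³ and s ≠ 0. Then R has exactly two distinct eigenvalues: the simple eigenvalue α = r/3 + 2t/s, whose eigenspace is one-dimensional, and the double eigenvalue β = r/3 − t/s, whose eigenspace is two-dimensional. -/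
open Matrix Module

/-- The Cayley–Hamilton identity for traceless `3 × 3` matrices, in terms of power traces. -/
theorem Matrix.pow_three_of_trace_eq_zero {K : Type*} [Field K] [CharZero K]
    (A : Matrix (Fin 3) (Fin 3) K) (hA : A.trace = 0) :
    A ^ 3 = ((A ^ 2).trace / 2) • A + ((A ^ 3).trace / 3) • (1 : Matrix (Fin 3) (Fin 3) K) := by
  rw [Matrix.trace_fin_three] at hA
  have h22 : A 2 2 = -A 0 0 - A 1 1 := by linear_combination hA
  ext i j
  fin_cases i <;> fin_cases j <;>
    simp [pow_succ, Matrix.mul_apply, Fin.sum_univ_three, Matrix.trace_fin_three, h22] <;> ring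

/-- A symmetric real matrix whose square vanishes is zero. -/
theorem Matrix.IsSymm.eq_zero_of_mul_self_eq_zero {n : Type*} [Fintype n] {A : Matrix n n ℝ}
    (hA : A.IsSymm) (h : A * A = 0) : A = 0 := by
  rw [← Matrix.conjTranspose_mul_self_eq_zero, Matrix.conjTranspose_eq_transpose_of_trivial, hA.eq,
    h]

/-- For an idempotent `p` and `α ≠ β`, the `α`-eigenspace of `β + (α - β) p` is the range of `p`. -/
theorem LinearMap.IsIdempotentElem.eigenspace_smul_one_add_smul_left {K V : Type*} [Field K]
    [AddCommGroup V] [Module K V] {p : End K V} {α β : K} (hp : IsIdempotentElem p)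
    (hαβ : α ≠ β) :
    End.eigenspace (β • 1 + (α - β) • p) α = LinearMap.range p := by
  ext v
  rw [End.mem_eigenspace_iff, LinearMap.IsIdempotentElem.mem_range_iff hp]
  have key : (β • 1 + (α - β) • p) v - α • v = (α - β) • (p v - v) := by
    simp only [LinearMap.add_apply, LinearMap.smul_apply, End.one_apply]
    module
  rw [← sub_eq_zero, key, smul_eq_zero_iff_right (sub_ne_zero.2 hαβ), sub_eq_zero]

/-- For `α ≠ β`, the `β`-eigenspace of `β + (α - β) p` is the kernel of `p`. -/
theorem Module.End.eigenspace_smul_one_add_smul_right {K V : Type*} [Field K] [AddCommGroup V]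
    [Module K V] {p : End K V} {α β : K} (hαβ : α ≠ β) :
    End.eigenspace (β • 1 + (α - β) • p) β = LinearMap.ker p := by
  ext v
  simp [sub_ne_zero.2 hαβ]

/-- For an idempotent `p`, every eigenvalue of `β + (α - β) p` is `α` or `β`. -/
theorem LinearMap.IsIdempotentElem.eq_or_eq_of_hasEigenvalue {K V : Type*} [Field K]
    [AddCommGroup V] [Module K V] {p : End K V} {α β μ : K} (hp : IsIdempotentElem p)
    (hμ : End.HasEigenvalue (β • 1 + (α - β) • p) μ) : μ = α ∨ μ = β := by
  obtain ⟨v, hv⟩ := hμ.exists_hasEigenvector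
  have h : (α - β) • p v = (μ - β) • v := by
    have := hv.apply_eq_smul
    simp only [LinearMap.add_apply, LinearMap.smul_apply, End.one_apply] at this
    rw [sub_smul μ, ← this]
    abel
  have hpp : p (p v) = p v := LinearMap.congr_fun hp v
  have h' : (μ - α) • (μ - β) • v = 0 := by
    have h2 := congrArg p h
    rw [map_smul, map_smul, hpp] at h2
    have h3 : (μ - α) • p v = 0 := by
      linear_combination (norm := module) -h2
    rw [← h, smul_comm, h3, smul_zero]
  rw [smul_smul, smul_eq_zero_iff_left hv.2, mul_eq_zero, sub_eq_zero, sub_eq_zero] at h'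
  exact h'

theorem ricci_algebraically_special_eigenstructure (R : Matrix (Fin 3) (Fin 3) ℝ)
    (hsymm : R.IsSymm) (r : ℝ) (hr : r = R.trace)
    (S : Matrix (Fin 3) (Fin 3) ℝ) (hSdef : S = R - (r / 3) • (1 : Matrix (Fin 3) (Fin 3) ℝ))
    (s t : ℝ) (hs : s = (S ^ 2).trace) (ht : t = (S ^ 3).trace)
    (hspec : 6 * t ^ 2 = s ^ 3) (hsne : s ≠ 0)
    (α β : ℝ) (hα : α = r / 3 + 2 * t / s) (hβ : β = r / 3 - t / s) :
    α ≠ β ∧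
    Module.End.HasEigenvalue (Matrix.toLin' R) α ∧
    Module.End.HasEigenvalue (Matrix.toLin' R) β ∧
    (∀ μ : ℝ, Module.End.HasEigenvalue (Matrix.toLin' R) μ → μ = α ∨ μ = β) ∧
    Module.finrank ℝ (Module.End.eigenspace (Matrix.toLin' R) α) = 1 ∧
    Module.finrank ℝ (Module.End.eigenspace (Matrix.toLin' R) β) = 2 := by
  obtain ⟨u, hu⟩ : ∃ u, u = t / s := ⟨_, rfl⟩
  have hsu : s = 6 * u ^ 2 := by
    rw [hu]; field_simp; linarith
  have htu : t = 6 * u ^ 3 := by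
    have : t = u * s := by rw [hu]; field_simp
    rw [this, hsu]; ring
  have hu0 : u ≠ 0 := by
    rintro rfl
    exact hsne (by rw [hsu]; ring)
  have hαu : α = r / 3 + 2 * u := by rw [hα, hu]; ring
  have hβu : β = r / 3 - u := by rw [hβ, hu]
  have hdiff : α - β = 3 * u := by rw [hαu, hβu]; ring
  have hαβ : α ≠ β := sub_ne_zero.1 (by rw [hdiff]; positivity)
  have hStr : S.trace = 0 := by
    rw [hSdef, Matrix.trace_sub, Matrix.trace_smul, Matrix.trace_one, ← hr]
    simp
  have hSsymm : S.IsSymm := by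
    rw [hSdef]; exact hsymm.sub (Matrix.isSymm_one.smul _)
  have hCH : S ^ 3 = (3 * u ^ 2) • S + (2 * u ^ 3) • (1 : Matrix (Fin 3) (Fin 3) ℝ) := by
    rw [S.pow_three_of_trace_eq_zero hStr, ← hs, ← ht, hsu, htu]
    congr 2 <;> ring
  have hquad : S ^ 2 - u • S - (2 * u ^ 2) • (1 : Matrix (Fin 3) (Fin 3) ℝ) = 0 := by
    refine Matrix.IsSymm.eq_zero_of_mul_self_eq_zero
      (((hSsymm.pow 2).sub (hSsymm.smul _)).sub (Matrix.isSymm_one.smul _)) ?_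
    have h4 : (S - (2 * u) • 1) * (S ^ 3 - (3 * u ^ 2) • S - (2 * u ^ 3) • 1) = 0 := by
      rw [hCH]; simp
    rw [← h4]
    noncomm_ring
    module
  obtain ⟨P, hP⟩ : ∃ P : Matrix (Fin 3) (Fin 3) ℝ, P = (3 * u)⁻¹ • (S + u • 1) := ⟨_, rfl⟩
  have hPidem : P * P = P := by
    have hsq : S * S = u • S + (2 * u ^ 2) • (1 : Matrix (Fin 3) (Fin 3) ℝ) := by
      rw [← pow_two]
      linear_combination (norm := module) hquad
    have : (S + u • 1) * (S + u • 1) = (3 * u) • (S + u • (1 : Matrix (Fin 3) (Fin 3) ℝ)) := by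
      simp only [add_mul, mul_add, hsq, smul_mul_assoc, mul_smul_comm, one_mul, mul_one]
      module
    rw [hP, smul_mul_smul_comm, this, smul_smul]
    congr 1
    field_simp
  have hPtr : P.trace = 1 := by
    rw [hP, Matrix.trace_smul, Matrix.trace_add, hStr, Matrix.trace_smul, Matrix.trace_one]
    simp
    field_simp
  have hR : R = β • 1 + (α - β) • P := by
    rw [hP, hdiff, smul_smul, mul_inv_cancel₀ (by positivity), hSdef, hβu]
    module
  have hRlin : Matrix.toLin' R = β • (1 : End ℝ (Fin 3 → ℝ)) + (α - β) • Matrix.toLin' P := by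
    rw [hR, map_add, map_smul, map_smul, Matrix.toLin'_one]
    rfl
  have hp : IsIdempotentElem (Matrix.toLin' P) := by
    rw [IsIdempotentElem, Module.End.mul_eq_comp, ← Matrix.toLin'_mul, hPidem]
  have hrange : finrank ℝ (LinearMap.range (Matrix.toLin' P)) = 1 := by
    have := (LinearMap.IsIdempotentElem.isProj_range _ hp).trace
    rw [Matrix.trace_toLin'_eq, hPtr] at this
    exact_mod_cast this.symm
  have hker : finrank ℝ (LinearMap.ker (Matrix.toLin' P)) = 2 := by
    have := LinearMap.finrank_range_add_finrank_ker (Matrix.toLin' P)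
    rw [hrange, Module.finrank_fin_fun] at this
    omega
  have hfinα : finrank ℝ (End.eigenspace (Matrix.toLin' R) α) = 1 := by
    rw [hRlin, LinearMap.IsIdempotentElem.eigenspace_smul_one_add_smul_left hp hαβ, hrange]
  have hfinβ : finrank ℝ (End.eigenspace (Matrix.toLin' R) β) = 2 := by
    rw [hRlin, End.eigenspace_smul_one_add_smul_right hαβ, hker]
  have hasEigenvalue {μ : ℝ} (h : finrank ℝ (End.eigenspace (Matrix.toLin' R) μ) ≠ 0) :
      End.HasEigenvalue (Matrix.toLin' R) μ := by
    rw [End.hasEigenvalue_iff]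
    intro hbot
    rw [hbot, finrank_bot] at h
    exact h rfl
  refine ⟨hαβ, hasEigenvalue (by simp [hfinα]), hasEigenvalue (by simp [hfinβ]), fun μ hμ => ?_,
    hfinα, hfinβ⟩
  rw [hRlin] at hμ
  exact LinearMap.IsIdempotentElem.eq_or_eq_of_hasEigenvalue hp hμ
end

section
/- Let R be a real symmetric 3×3 matrix, r = tr(R), S = R − (r/3)·I, s = tr(S²) and t = tr(S³). Assume 6t² = s³ and s ≠ 0, and let u be a unit eigenvector of S for the eigenvalue 2t/s. Then R = (r/3 + 2t/s)·u uᵀ + (r/3 − t/s)·(I − u uᵀ), i.e., R decomposes spectrally as α·u⊗u + β·h with α = r/3 + 2t/s, β = r/3 − t/s and h = I − u⊗u. -/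
open Matrix

/-- A real symmetric matrix whose square has trace zero vanishes. -/
lemma Matrix.IsSymm.eq_zero_of_trace_mul_self {n : Type*} [Fintype n] {D : Matrix n n ℝ}
    (hD : D.IsSymm) (h : (D * D).trace = 0) : D = 0 := by
  rw [← trace_conjTranspose_mul_self_eq_zero_iff, conjTranspose_eq_transpose_of_trivial, hD.eq, h]

theorem ricci_spectral_decomposition (R : Matrix (Fin 3) (Fin 3) ℝ)
    (hsymm : R.IsSymm) (r : ℝ) (hr : r = R.trace)
    (S : Matrix (Fin 3) (Fin 3) ℝ) (hSdef : S = R - (r / 3) • (1 : Matrix (Fin 3) (Fin 3) ℝ))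
    (s t : ℝ) (hs : s = (S ^ 2).trace) (ht : t = (S ^ 3).trace)
    (hspec : 6 * t ^ 2 = s ^ 3) (hsne : s ≠ 0)
    (u : Fin 3 → ℝ) (hu : u ⬝ᵥ u = 1) (heig : S.mulVec u = (2 * t / s) • u) :
    R = (r / 3 + 2 * t / s) • vecMulVec u u +
        (r / 3 - t / s) • ((1 : Matrix (Fin 3) (Fin 3) ℝ) - vecMulVec u u) := by
  obtain ⟨m, hm⟩ : ∃ m, m = t / s := ⟨_, rfl⟩
  have hm2 : 6 * m ^ 2 = s := by
    rw [hm]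
    field_simp
    linarith
  rw [mul_div_assoc, ← hm] at heig ⊢
  have hS0 : S.trace = 0 := by
    rw [hSdef, trace_sub, trace_smul, trace_one, ← hr]
    simp
  have hSsymm : S.IsSymm := by
    rw [hSdef]
    exact hsymm.sub (isSymm_one.smul _)
  set P := vecMulVec u u with hP
  have hPsymm : P.IsSymm := transpose_vecMulVec u u
  have hPP : P * P = P := by
    rw [hP, vecMulVec_mul_vecMulVec, hu, one_smul]
  have hPtr : P.trace = 1 := by
    rw [hP, trace_vecMulVec, hu]
  have hSP : S * P = (2 * m) • P := by
    rw [hP, mul_vecMulVec, heig, smul_vecMulVec]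
  have hPS : (P * S).trace = 2 * m := by
    rw [trace_mul_comm, hSP, trace_smul, hPtr, smul_eq_mul, mul_one]
  have hD : S - (3 * m) • P + m • (1 : Matrix (Fin 3) (Fin 3) ℝ) = 0 := by
    apply ((hSsymm.sub (hPsymm.smul _)).add (isSymm_one.smul _)).eq_zero_of_trace_mul_self
    have hSS : (S * S).trace = 6 * m ^ 2 := by rw [hm2, hs, sq]
    simp only [add_mul, sub_mul, mul_add, mul_sub, smul_mul_assoc, mul_smul_comm, hPP, hSP,
      trace_add, trace_sub, trace_smul, hPS, hSS, hPtr, hS0, mul_one, one_mul, trace_one,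
      smul_eq_mul, Fintype.card_fin]
    push_cast
    ring
  have hR : R = S + (r / 3) • (1 : Matrix (Fin 3) (Fin 3) ℝ) := by rw [hSdef, sub_add_cancel]
  have hS : S = (3 * m) • P - m • (1 : Matrix (Fin 3) (Fin 3) ℝ) := by
    rw [← sub_eq_zero, ← hD]
    abel
  rw [hR, hS]
  module
end

section
/- Let S be a real symmetric traceless 3×3 matrix with s = tr(S²) and t = tr(S³), assume 6t² = s³ and s ≠ 0, and let u be a unit eigenvector of S for the eigenvalue 2t/s. Then (1/t)·(2S³ − (4/3)·s·S) = I − u uᵀ. -/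
open Matrix

/-- A real symmetric traceless `3 × 3` matrix with `tr (S ^ 2) = 6 a ^ 2` and a unit eigenvector `u`
for the eigenvalue `2 a` is `3 a u uᵀ - a I`. -/
theorem eq_smul_vecMulVec_sub_of_trace_sq_eq {S : Matrix (Fin 3) (Fin 3) ℝ} {a : ℝ}
    {u : Fin 3 → ℝ} (hsymm : S.IsSymm) (hS : S.trace = 0) (hsq : (S ^ 2).trace = 6 * a ^ 2)
    (hu : u ⬝ᵥ u = 1) (heig : S.mulVec u = (2 * a) • u) :
    S = (3 * a) • vecMulVec u u - a • (1 : Matrix (Fin 3) (Fin 3) ℝ) := by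
  set P := vecMulVec u u with hP
  have hPP : P * P = P := by simp [hP, vecMulVec_mul_vecMulVec, hu]
  have hPt : Pᵀ = P := transpose_vecMulVec u u
  have hPtr : P.trace = 1 := by rw [hP, trace_vecMulVec, hu]
  have hSP : S * P = (2 * a) • P := by rw [hP, mul_vecMulVec, heig, smul_vecMulVec]
  have hPS : P * S = (2 * a) • P := by
    have h := congrArg transpose hSP
    rwa [transpose_mul, transpose_smul, hPt, hsymm.eq] at h
  rw [← sub_eq_zero, ← trace_conjTranspose_mul_self_eq_zero_iff]
  simp only [conjTranspose_eq_transpose_of_trivial, transpose_sub, transpose_smul, hPt,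
    hsymm.eq, transpose_one]
  simp only [sub_mul, mul_sub, smul_mul_assoc, mul_smul_comm, hSP, hPS, hPP, mul_one, one_mul,
    trace_sub, trace_smul, hPtr, hS, ← pow_two S, hsq, trace_one, smul_eq_mul, Fintype.card_fin]
  push_cast
  ring

theorem projector_formula (S : Matrix (Fin 3) (Fin 3) ℝ)
    (hsymm : S.IsSymm) (hS : S.trace = 0)
    (s t : ℝ) (hs : s = (S ^ 2).trace) (ht : t = (S ^ 3).trace)
    (hspec : 6 * t ^ 2 = s ^ 3) (hsne : s ≠ 0)
    (u : Fin 3 → ℝ) (hu : u ⬝ᵥ u = 1) (heig : S.mulVec u = (2 * t / s) • u) :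
    (1 / t) • ((2 : ℝ) • S ^ 3 - (4 / 3 * s) • S) =
      (1 : Matrix (Fin 3) (Fin 3) ℝ) - vecMulVec u u := by
  obtain ⟨a, rfl⟩ : ∃ a, t = a * s := ⟨t / s, by field_simp⟩
  have hsa : s = 6 * a ^ 2 := mul_left_cancel₀ (pow_ne_zero 2 hsne) (by linear_combination -hspec)
  have ha : a ≠ 0 := by
    rintro rfl
    simp [hsa] at hsne
  rw [show 2 * (a * s) / s = 2 * a by field_simp] at heig
  have hdec := eq_smul_vecMulVec_sub_of_trace_sq_eq hsymm hS (hs.symm.trans hsa) hu heig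
  have hPP : vecMulVec u u * vecMulVec u u = vecMulVec u u := by
    simp [vecMulVec_mul_vecMulVec, hu]
  have hcube : S ^ 3 = (9 * a ^ 3) • vecMulVec u u - a ^ 3 • (1 : Matrix (Fin 3) (Fin 3) ℝ) := by
    rw [hdec]
    simp only [pow_succ, pow_zero, one_mul, sub_mul, mul_sub, smul_mul_assoc, mul_smul_comm, hPP,
      mul_one]
    module
  rw [hcube, hdec, hsa]
  match_scalars <;> field_simp <;> norm_num
end

section
/- Let u be a unit vector in ℝ³ and v a nonzero vector in ℝ³ with ⟨u, v⟩ = 0. Set h = I − u uᵀ and A = 2·v vᵀ − ‖v‖²·h. Then A is symmetric and traceless, and A·v = ‖v‖²·v, A·(u × v) = −‖v‖²·(u × v), A·u = 0; in particular A has the three pairwise distinct eigenvalues ‖v‖², −‖v‖², 0. -/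
open Matrix

/-- A nonzero vector `x` with `A *ᵥ x = μ • x` makes `μ` an eigenvalue of `A`. -/
theorem hasEigenvalue_toLin'_of_mulVec_eq {n R : Type*} [Fintype n] [DecidableEq n] [CommRing R]
    {A : Matrix n n R} {μ : R} {x : n → R} (hx : x ≠ 0) (hAx : A *ᵥ x = μ • x) :
    Module.End.HasEigenvalue (Matrix.toLin' A) μ :=
  Module.End.hasEigenvalue_of_hasEigenvector
    ⟨Module.End.mem_eigenspace_iff.mpr (by rw [Matrix.toLin'_apply, hAx]), hx⟩

/-- Action of the tensor `2 v ⊗ v - ‖v‖² (1 - u ⊗ u)` on a vector. -/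
theorem auxiliary_tensor_mulVec {n R : Type*} [Fintype n] [DecidableEq n] [CommRing R]
    (u v x : n → R) :
    ((2 : R) • vecMulVec v v - (v ⬝ᵥ v) • (1 - vecMulVec u u)) *ᵥ x =
      (2 * (v ⬝ᵥ x)) • v - (v ⬝ᵥ v) • (x - (u ⬝ᵥ x) • u) := by
  simp [sub_mulVec, smul_mulVec, vecMulVec_mulVec, mul_smul]

theorem auxiliary_tensor_eigenstructure (u v : Fin 3 → ℝ)
    (hu : u ⬝ᵥ u = 1) (hv : v ≠ 0) (horth : u ⬝ᵥ v = 0)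
    (h A : Matrix (Fin 3) (Fin 3) ℝ)
    (hdef : h = (1 : Matrix (Fin 3) (Fin 3) ℝ) - vecMulVec u u)
    (hAdef : A = (2 : ℝ) • vecMulVec v v - (v ⬝ᵥ v) • h) :
    A.IsSymm ∧ A.trace = 0 ∧
    A.mulVec v = (v ⬝ᵥ v) • v ∧
    A.mulVec (crossProduct u v) = (-(v ⬝ᵥ v)) • (crossProduct u v) ∧
    A.mulVec u = 0 ∧
    ((v ⬝ᵥ v) ≠ -(v ⬝ᵥ v) ∧ (v ⬝ᵥ v) ≠ 0 ∧ -(v ⬝ᵥ v) ≠ 0 ∧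
      Module.End.HasEigenvalue (Matrix.toLin' A) (v ⬝ᵥ v) ∧
      Module.End.HasEigenvalue (Matrix.toLin' A) (-(v ⬝ᵥ v)) ∧
      Module.End.HasEigenvalue (Matrix.toLin' A) 0) := by
  subst hdef hAdef
  have hvv : v ⬝ᵥ v ≠ 0 := fun h0 => hv (dotProduct_self_eq_zero.mp h0)
  have hu0 : u ≠ 0 := by
    rintro rfl
    simp at hu
  have hvu : v ⬝ᵥ u = 0 := by rw [dotProduct_comm, horth]
  have hcross : crossProduct u v ≠ 0 := by
    intro h0
    have hnorm := cross_dot_cross u v u v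
    rw [h0, hu, horth, hvu] at hnorm
    exact hvv (by simpa using hnorm.symm)
  have hAv := auxiliary_tensor_mulVec u v v
  rw [horth, zero_smul, sub_zero, ← sub_smul, two_mul, add_sub_cancel_right] at hAv
  have hAc := auxiliary_tensor_mulVec u v (crossProduct u v)
  rw [dot_self_cross, dot_cross_self, mul_zero, zero_smul, zero_smul, sub_zero, zero_sub,
    ← neg_smul] at hAc
  have hAu := auxiliary_tensor_mulVec u v u
  rw [hvu, hu, mul_zero, zero_smul, one_smul, sub_self, smul_zero, sub_zero] at hAu
  refine ⟨?_, ?_, hAv, hAc, hAu, fun h0 => hvv (self_eq_neg.mp h0), hvv, neg_ne_zero.mpr hvv,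
    hasEigenvalue_toLin'_of_mulVec_eq hv hAv, hasEigenvalue_toLin'_of_mulVec_eq hcross hAc,
    hasEigenvalue_toLin'_of_mulVec_eq hu0 (by rw [hAu, zero_smul])⟩
  · simp [Matrix.IsSymm, transpose_vecMulVec]
  · simp only [trace_sub, trace_smul, trace_vecMulVec, trace_one, hu, Fintype.card_fin,
      smul_eq_mul]
    push_cast
    ring
end

section
/- Let E be a real normed vector space, U ⊆ E an open set, and r, s, t : U → ℝ differentiable functions with 6·t(x)² = s(x)³ for all x ∈ U. Let p ∈ U with s(p) ≠ 0, and define α = r/3 + 2t/s on a neighborhood of p. Then α is differentiable at p and Dα(p) = (1/3)·( Dr(p) + (2/s(p))·Dt(p) ). -/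
theorem simple_eigenvalue_differential {E : Type*} [NormedAddCommGroup E] [NormedSpace ℝ E]
    (U : Set E) (hU : IsOpen U) (r s t : E → ℝ)
    (hr : ∀ x ∈ U, DifferentiableAt ℝ r x)
    (hs : ∀ x ∈ U, DifferentiableAt ℝ s x)
    (ht : ∀ x ∈ U, DifferentiableAt ℝ t x)
    (hspec : ∀ x ∈ U, 6 * t x ^ 2 = s x ^ 3)
    (p : E) (hp : p ∈ U) (hsp : s p ≠ 0)
    (α : E → ℝ) (hα : α = fun x => r x / 3 + 2 * t x / s x) :
    DifferentiableAt ℝ α p ∧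
    fderiv ℝ α p = (1 / 3 : ℝ) • (fderiv ℝ r p + (2 / s p) • fderiv ℝ t p) := by
  subst hα
  have hr' := (hr p hp).hasFDerivAt
  have hs' := (hs p hp).hasFDerivAt
  have ht' := (ht p hp).hasFDerivAt
  have hspec_deriv : (12 * t p) • fderiv ℝ t p = (3 * s p ^ 2) • fderiv ℝ s p := by
    have hleft := (ht'.pow 2).const_mul 6
    have hright := (hs'.pow 3).congr_of_eventuallyEq
      (Filter.eventually_of_mem (hU.mem_nhds hp) hspec)
    have heq := hleft.unique hright
    ext v
    have hv := DFunLike.congr_fun heq v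
    simp at hv ⊢
    linarith
  have hα' : HasFDerivAt (fun x => r x / 3 + 2 * t x / s x)
      ((1 / 3 : ℝ) • (fderiv ℝ r p + (2 / s p) • fderiv ℝ t p)) p := by
    have hsum := (hr'.mul_const (1 / 3 : ℝ)).add
      ((ht'.const_mul 2).mul ((hasDerivAt_inv hsp).comp_hasFDerivAt p hs'))
    refine (hsum.congr_fderiv ?_).congr_of_eventuallyEq
      (Filter.Eventually.of_forall fun x => by simp [div_eq_mul_inv])
    ext v
    have hv := DFunLike.congr_fun hspec_deriv v
    have hp' := hspec p hp
    simp at hv ⊢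
    have hsv : fderiv ℝ s p v = 4 * t p * fderiv ℝ t p v / s p ^ 2 := by
      field_simp
      linarith
    rw [hsv]
    field_simp
    linear_combination (-2 * fderiv ℝ t p v) * hp'
  exact ⟨hα'.differentiableAt, hα'.fderiv⟩
end
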